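/- Let n ≥ 1, s ∈ (0,1) and a > n, and let g : ℝⁿ → ℝ be given by g(x) = (1 + ‖x‖²)^{−a/2}. Then there exists a constant C > 0 such that for every x ∈ ℝⁿ: |∫_{ℝⁿ} (2g(x) − g(x+y) − g(x−y)) ‖y‖^{−n−2s} dy| ≤ C (1 + ‖x‖²)^{−(n+2s)/2}, the integral being absolutely convergent. -/

import Mathlib

open MeasureTheory

/-!
Write `R = √(1 + ‖x‖²)`. On the ball `‖y‖ ≤ δ R` the binomial expansion of
`(1 + ‖x + y‖²) ^ (-a / 2) = R ^ (-a) (1 + (‖y‖² + 2 ⟪x, y⟫) / R²) ^ (-a / 2)` has a first-order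
term that is odd in `y` up to `O((‖y‖ / R)²)`, so the second difference of `g` at `x` is
`O(R ^ (-a) (‖y‖ / R)²)`. Outside that ball `‖y‖ ^ (-n - 2s) ≲ R ^ (-n - 2s)`, and the translates
of `g` have the same finite integral. Rescaling `y` by `δ R`, the near part and the term `2 g x`
together contribute `R ^ (-n - 2s) R ^ (n - a)`, and `R ^ (n - a) ≤ 1` because `a > n`.
-/

open Asymptotics Filter Module Set Topology
open scoped RealInnerProductSpace

/-- The Japanese bracket `⟨x⟩ = (1 + ‖x‖²)^{1/2}`. -/
noncomputable def japaneseBracket {E : Type*} [Norm E] (x : E) : ℝ :=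
  √(1 + ‖x‖ ^ 2)

/-- The symmetric second difference `2 g(x) - g(x + y) - g(x - y)`, with the sign for which it
represents the positive operator `(-Δ)^s`. -/
def secondDifference {E : Type*} [AddGroup E] (g : E → ℝ) (x y : E) : ℝ :=
  2 * g x - g (x + y) - g (x - y)

/-- The kernel `‖z‖^{-α}` weighted by `min(‖z‖², 1)`, the size of second differences at unit scale.
Its integrability is the Lévy condition on the measure `‖z‖^{-α} dz`. -/
noncomputable def weightedKernel {E : Type*} [Norm E] (α : ℝ) (z : E) : ℝ :=
  min (‖z‖ ^ 2) 1 * ‖z‖ ^ (-α)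

section JapaneseBracket

variable {E : Type*} [SeminormedAddCommGroup E] (x : E)

lemma one_le_japaneseBracket : 1 ≤ japaneseBracket x :=
  Real.one_le_sqrt.2 (by simp)

lemma japaneseBracket_pos : 0 < japaneseBracket x :=
  one_pos.trans_le (one_le_japaneseBracket x)

lemma japaneseBracket_sq : japaneseBracket x ^ 2 = 1 + ‖x‖ ^ 2 :=
  Real.sq_sqrt (by positivity)

lemma norm_le_japaneseBracket : ‖x‖ ≤ japaneseBracket x :=
  Real.le_sqrt_of_sq_le (by simp)

lemma one_add_norm_sq_rpow_div_two (p : ℝ) :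
    (1 + ‖x‖ ^ 2) ^ (p / 2) = japaneseBracket x ^ p :=
  Real.rpow_div_two_eq_sqrt p (by positivity)

end JapaneseBracket

section Taylor

lemma isBigO_one_add_rpow_sub_one_sub_mul (p : ℝ) :
    (fun v : ℝ ↦ (1 + v) ^ p - 1 - p * v) =O[𝓝 0] fun v ↦ v ^ 2 := by
  have taylor := (Real.one_add_rpow_hasFPowerSeriesAt_zero (a := p)).isBigO_sub_partialSum_pow 2
  simpa [FormalMultilinearSeries.partialSum, Finset.sum_range_succ, sub_sub, mul_comm,
    binomialSeries, FormalMultilinearSeries.coeff_ofScalars] using taylor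

variable {E : Type*} [SeminormedAddCommGroup E] [InnerProductSpace ℝ E]

lemma japaneseBracket_add_rpow (x y : E) (p : ℝ) :
    japaneseBracket (x + y) ^ p = japaneseBracket x ^ p *
      (1 + (‖y‖ ^ 2 + 2 * ⟪x, y⟫) / japaneseBracket x ^ 2) ^ (p / 2) := by
  have R_pos := japaneseBracket_pos x
  have factor : 1 + ‖x + y‖ ^ 2 = japaneseBracket x ^ 2 *
      (1 + (‖y‖ ^ 2 + 2 * ⟪x, y⟫) / japaneseBracket x ^ 2) := by
    rw [mul_add, mul_div_cancel₀ _ (by positivity), japaneseBracket_sq, norm_add_sq_real]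
    ring
  have increment_nonneg : 0 ≤ 1 + (‖y‖ ^ 2 + 2 * ⟪x, y⟫) / japaneseBracket x ^ 2 :=
    nonneg_of_mul_nonneg_right (factor ▸ by positivity) (pow_pos R_pos 2)
  rw [← one_add_norm_sq_rpow_div_two, factor, Real.mul_rpow (by positivity) increment_nonneg,
    japaneseBracket_sq, one_add_norm_sq_rpow_div_two]

lemma abs_norm_sq_add_two_mul_inner_div_le {x y : E} (hy : ‖y‖ ≤ japaneseBracket x) :
    |(‖y‖ ^ 2 + 2 * ⟪x, y⟫) / japaneseBracket x ^ 2| ≤ 3 * (‖y‖ / japaneseBracket x) := by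
  have R_pos := japaneseBracket_pos x
  have inner_le : |⟪x, y⟫| ≤ japaneseBracket x * ‖y‖ :=
    (abs_real_inner_le_norm x y).trans (by gcongr; exact norm_le_japaneseBracket x)
  rw [abs_div, abs_of_pos (pow_pos R_pos 2), div_le_iff₀ (by positivity)]
  calc |‖y‖ ^ 2 + 2 * ⟪x, y⟫| ≤ ‖y‖ ^ 2 + 2 * |⟪x, y⟫| := by
        refine (abs_add_le _ _).trans_eq ?_
        rw [abs_mul, abs_two, abs_of_nonneg (sq_nonneg ‖y‖)]
    _ ≤ japaneseBracket x * ‖y‖ + 2 * (japaneseBracket x * ‖y‖) := by rw [sq]; gcongr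
    _ = 3 * (‖y‖ / japaneseBracket x) * japaneseBracket x ^ 2 := by field_simp; ring

lemma exists_abs_japaneseBracket_add_rpow_sub_le (p : ℝ) :
    ∃ δ > 0, ∃ C ≥ 0, ∀ x y : E, ‖y‖ ≤ δ * japaneseBracket x →
      |japaneseBracket (x + y) ^ p -
          japaneseBracket x ^ p * (1 + p * ⟪x, y⟫ / japaneseBracket x ^ 2)| ≤
        C * japaneseBracket x ^ p * (‖y‖ / japaneseBracket x) ^ 2 := by
  obtain ⟨M, M_pos, remainder_le⟩ := (isBigO_one_add_rpow_sub_one_sub_mul (p / 2)).exists_pos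
  obtain ⟨ε, ε_pos, remainder_le⟩ := Metric.eventually_nhds_iff.1 remainder_le.bound
  refine ⟨min 1 (ε / 4), by positivity, 9 * M + |p| / 2, by positivity, fun x y hy ↦ ?_⟩
  have R_pos := japaneseBracket_pos x
  set R := japaneseBracket x
  set t := ‖y‖ / R
  set v := (‖y‖ ^ 2 + 2 * ⟪x, y⟫) / R ^ 2 with hv
  obtain ⟨t_le_one, t_le⟩ : t ≤ 1 ∧ t ≤ ε / 4 := le_min_iff.1 ((div_le_iff₀ R_pos).2 hy)
  have v_le : |v| ≤ 3 * t := abs_norm_sq_add_two_mul_inner_div_le ((div_le_one R_pos).1 t_le_one)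
  have remainder_le : |(1 + v) ^ (p / 2) - 1 - p / 2 * v| ≤ M * v ^ 2 := by
    simpa using remainder_le (y := v) (by rw [Real.dist_0_eq_abs]; linarith)
  have v_sq_le : v ^ 2 ≤ 9 * t ^ 2 := by
    calc v ^ 2 = |v| ^ 2 := (sq_abs v).symm
      _ ≤ (3 * t) ^ 2 := by gcongr
      _ = 9 * t ^ 2 := by ring
  have v_eq : p / 2 * v = p * ⟪x, y⟫ / R ^ 2 + p / 2 * t ^ 2 := by
    rw [hv, div_pow]; ring
  rw [japaneseBracket_add_rpow, ← mul_sub, abs_mul, abs_of_pos (by positivity)]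
  calc R ^ p * |(1 + v) ^ (p / 2) - (1 + p * ⟪x, y⟫ / R ^ 2)|
      = R ^ p * |((1 + v) ^ (p / 2) - 1 - p / 2 * v) + p / 2 * t ^ 2| := by
        rw [v_eq]; ring_nf
    _ ≤ R ^ p * (M * v ^ 2 + |p / 2 * t ^ 2|) := by
        gcongr; exact (abs_add_le _ _).trans (by gcongr)
    _ = R ^ p * (M * v ^ 2 + |p| / 2 * t ^ 2) := by simp [abs_mul, abs_div]
    _ ≤ R ^ p * (M * (9 * t ^ 2) + |p| / 2 * t ^ 2) := by gcongr
    _ = (9 * M + |p| / 2) * R ^ p * t ^ 2 := by ring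

lemma exists_abs_secondDifference_japaneseBracket_rpow_le (p : ℝ) :
    ∃ δ > 0, ∃ C ≥ 0, ∀ x y : E, ‖y‖ ≤ δ * japaneseBracket x →
      |secondDifference (fun z ↦ japaneseBracket z ^ p) x y| ≤
        C * japaneseBracket x ^ p * (‖y‖ / japaneseBracket x) ^ 2 := by
  obtain ⟨δ, δ_pos, C, C_nonneg, taylor⟩ := exists_abs_japaneseBracket_add_rpow_sub_le (E := E) p
  refine ⟨δ, δ_pos, 2 * C, by positivity, fun x y hy ↦ ?_⟩
  have forward := abs_le.1 (taylor x y hy)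
  have backward := abs_le.1 (taylor x (-y) (by rwa [norm_neg]))
  rw [← sub_eq_add_neg, norm_neg, inner_neg_right, mul_neg, neg_div] at backward
  rw [secondDifference, abs_le]
  constructor <;> linarith

end Taylor

section Kernel

variable {E : Type*} [NormedAddCommGroup E]

lemma weightedKernel_nonneg (α : ℝ) (z : E) : 0 ≤ weightedKernel α z := by
  unfold weightedKernel; positivity

variable [NormedSpace ℝ E]

lemma integrable_weightedKernel [Nontrivial E] [FiniteDimensional ℝ E] [MeasurableSpace E]
    [BorelSpace E] (μ : Measure E) [μ.IsAddHaarMeasure] {α : ℝ}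
    (hα : finrank ℝ E < α) (hα' : α < finrank ℝ E + 2) :
    Integrable (weightedKernel (E := E) α) μ := by
  have rpow_eq {r : ℝ} (hr : 0 < r) (k : ℕ) :
      r ^ (finrank ℝ E - 1) * (r ^ k * r ^ (-α)) = r ^ ((finrank ℝ E : ℝ) - 1 + k - α) := by
    rw [sub_eq_add_neg _ α, Real.rpow_add hr, Real.rpow_add_natCast hr.ne', mul_assoc,
      ← Nat.cast_pred finrank_pos, Real.rpow_natCast]
  refine (integrable_fun_norm_addHaar (f := fun r ↦ min (r ^ 2) 1 * r ^ (-α)) μ).2 ?_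
  rw [← Ioc_union_Ioi_eq_Ioi zero_le_one]
  refine IntegrableOn.union ?_ ?_
  · rw [integrableOn_Ioc_iff_integrableOn_Ioo]
    refine ((intervalIntegral.integrableOn_Ioo_rpow_iff one_pos).2 ?_).congr_fun
      (fun r hr ↦ ?_) measurableSet_Ioo (f := fun r ↦ r ^ ((finrank ℝ E : ℝ) - 1 + (2 : ℕ) - α))
    · push_cast; linarith
    · simp only [smul_eq_mul, min_eq_left (pow_le_one₀ hr.1.le hr.2.le), rpow_eq hr.1]
  · refine (integrableOn_Ioi_rpow_of_lt ?_ one_pos).congr_fun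
      (fun r hr ↦ ?_) measurableSet_Ioi (f := fun r ↦ r ^ ((finrank ℝ E : ℝ) - 1 + (0 : ℕ) - α))
    · push_cast; linarith
    · simp only [smul_eq_mul, min_eq_right (one_le_pow₀ (mem_Ioi.1 hr).le),
        ← rpow_eq (one_pos.trans hr), pow_zero]

lemma abs_secondDifference_mul_rpow_le {g : E → ℝ} {x y : E} {r A α : ℝ} (hr : 0 < r)
    (hα : 0 ≤ α) (hA : 0 ≤ A)
    (near_le : ‖y‖ ≤ r → |secondDifference g x y| ≤ A * (‖y‖ / r) ^ 2) :
    |secondDifference g x y * ‖y‖ ^ (-α)| ≤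
      r ^ (-α) * ((2 * |g x| + A) * weightedKernel α (r⁻¹ • y) +
        (|g (x + y)| + |g (x - y)|)) := by
  have norm_smul_eq : ‖r⁻¹ • y‖ = ‖y‖ / r := by
    rw [norm_smul, norm_inv, Real.norm_of_nonneg hr.le, inv_mul_eq_div]
  rw [weightedKernel, norm_smul_eq, abs_mul, abs_of_nonneg (by positivity : 0 ≤ ‖y‖ ^ (-α)),
    show ‖y‖ = r * (‖y‖ / r) by field_simp, Real.mul_rpow hr.le (by positivity),
    mul_div_cancel_left₀ _ hr.ne', mul_left_comm]
  gcongr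
  set t := ‖y‖ / r
  rcases le_or_gt t 1 with ht | ht
  · rw [min_eq_left (pow_le_one₀ (by positivity) ht), ← mul_assoc]
    refine le_add_of_le_of_nonneg ?_ (by positivity)
    gcongr
    calc |secondDifference g x y| ≤ A * t ^ 2 := near_le ((div_le_one hr).1 ht)
      _ ≤ (2 * |g x| + A) * t ^ 2 := by gcongr; exact le_add_of_nonneg_left (by positivity)
  · have rpow_le_one : t ^ (-α) ≤ 1 := Real.rpow_le_one_of_one_le_of_nonpos ht.le (by linarith)
    have triangle : |secondDifference g x y| ≤ 2 * |g x| + A + (|g (x + y)| + |g (x - y)|) :=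
      calc |secondDifference g x y| ≤ |2 * g x| + |g (x + y)| + |g (x - y)| :=
            (abs_sub _ _).trans (by gcongr; exact abs_sub _ _)
        _ ≤ 2 * |g x| + A + (|g (x + y)| + |g (x - y)|) := by
            rw [add_assoc, abs_mul, abs_two]; gcongr; exact le_add_of_nonneg_right hA
    calc |secondDifference g x y| * t ^ (-α)
        ≤ (2 * |g x| + A + (|g (x + y)| + |g (x - y)|)) * t ^ (-α) := by gcongr
      _ ≤ (2 * |g x| + A) * (min (t ^ 2) 1 * t ^ (-α)) + (|g (x + y)| + |g (x - y)|) := by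
          rw [min_eq_right (one_le_pow₀ ht.le), one_mul, add_mul]
          gcongr
          exact mul_le_of_le_one_right (by positivity) rpow_le_one

variable [Nontrivial E] [FiniteDimensional ℝ E] [MeasurableSpace E] [BorelSpace E]
  {μ : Measure E} [μ.IsAddHaarMeasure]

lemma integrable_secondDifference_mul_rpow_and_abs_integral_le {g : E → ℝ}
    (hg : Integrable g μ) {x : E} {r A α : ℝ} (hr : 0 < r) (hα : finrank ℝ E < α)
    (hα' : α < finrank ℝ E + 2) (hA : 0 ≤ A)
    (near_le : ∀ y, ‖y‖ ≤ r → |secondDifference g x y| ≤ A * (‖y‖ / r) ^ 2) :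
    Integrable (fun y ↦ secondDifference g x y * ‖y‖ ^ (-α)) μ ∧
      |∫ y, secondDifference g x y * ‖y‖ ^ (-α) ∂μ| ≤
        r ^ (-α) * ((2 * |g x| + A) * (r ^ finrank ℝ E * ∫ z, weightedKernel α z ∂μ) +
          2 * ∫ z, |g z| ∂μ) := by
  have kernel_integrable : Integrable (fun y ↦ (2 * |g x| + A) * weightedKernel α (r⁻¹ • y)) μ :=
    ((integrable_weightedKernel μ hα hα').comp_smul (inv_ne_zero hr.ne')).const_mul _
  have forward := hg.comp_add_left x
  have backward := hg.comp_sub_left x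
  have translates_integrable : Integrable (fun y ↦ |g (x + y)| + |g (x - y)|) μ :=
    forward.abs.add backward.abs
  have majorant_integrable : Integrable (fun y ↦
      r ^ (-α) * ((2 * |g x| + A) * weightedKernel α (r⁻¹ • y) +
        (|g (x + y)| + |g (x - y)|))) μ :=
    (kernel_integrable.add translates_integrable).const_mul _
  have majorant : ∀ᵐ y ∂μ, ‖secondDifference g x y * ‖y‖ ^ (-α)‖ ≤
      r ^ (-α) * ((2 * |g x| + A) * weightedKernel α (r⁻¹ • y) +
        (|g (x + y)| + |g (x - y)|)) :=
    .of_forall fun y ↦ abs_secondDifference_mul_rpow_le hr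
      (hα.le.trans' (Nat.cast_nonneg _)) hA (near_le y)
  have measurable : AEStronglyMeasurable (fun y ↦ secondDifference g x y * ‖y‖ ^ (-α)) μ :=
    ((aestronglyMeasurable_const.sub forward.aestronglyMeasurable).sub
      backward.aestronglyMeasurable)
      |>.mul (measurable_norm.pow_const _).aestronglyMeasurable
  refine ⟨majorant_integrable.mono' measurable majorant,
    (norm_integral_le_of_norm_le majorant_integrable majorant).trans_eq ?_⟩
  rw [integral_const_mul, integral_add kernel_integrable translates_integrable,
    integral_const_mul, Measure.integral_comp_inv_smul_of_nonneg _ _ hr.le,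
    integral_add forward.abs backward.abs, integral_add_left_eq_self (fun z ↦ |g z|) x,
    integral_sub_left_eq_self (fun z ↦ |g z|) μ x, smul_eq_mul, ← two_mul]

lemma exists_abs_integral_secondDifference_mul_rpow_le {g : E → ℝ} (hg : Integrable g μ)
    {a α δ B M : ℝ} (ha : finrank ℝ E ≤ a) (hα : finrank ℝ E < α) (hα' : α < finrank ℝ E + 2)
    (center_le : ∀ x, |g x| ≤ B * japaneseBracket x ^ (-a)) (hδ : 0 < δ) (hM : 0 ≤ M)
    (near_le : ∀ x y, ‖y‖ ≤ δ * japaneseBracket x → |secondDifference g x y| ≤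
      M * japaneseBracket x ^ (-a) * (‖y‖ / japaneseBracket x) ^ 2) :
    ∃ C > 0, ∀ x, Integrable (fun y ↦ secondDifference g x y * ‖y‖ ^ (-α)) μ ∧
      |∫ y, secondDifference g x y * ‖y‖ ^ (-α) ∂μ| ≤ C * japaneseBracket x ^ (-α) := by
  have hB : 0 ≤ B := nonneg_of_mul_nonneg_left ((abs_nonneg _).trans (center_le 0))
    (Real.rpow_pos_of_pos (japaneseBracket_pos 0) _)
  set n := finrank ℝ E
  set K := ∫ z, weightedKernel α z ∂μ
  have K_nonneg : 0 ≤ K := integral_nonneg (weightedKernel_nonneg α)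
  set G := ∫ z, |g z| ∂μ
  have G_nonneg : 0 ≤ G := integral_nonneg fun z ↦ abs_nonneg _
  refine ⟨δ ^ (-α) * ((2 * B + M * δ ^ 2) * (δ ^ n * K) + 2 * G) + 1, by positivity, fun x ↦ ?_⟩
  have R_pos := japaneseBracket_pos x
  specialize center_le x
  specialize near_le x
  set R := japaneseBracket x
  have near_le (y : E) (hy : ‖y‖ ≤ δ * R) :
      |secondDifference g x y| ≤ M * δ ^ 2 * R ^ (-a) * (‖y‖ / (δ * R)) ^ 2 :=
    (near_le y hy).trans_eq (by field_simp)
  have volume_decay : R ^ (-a) * R ^ n ≤ 1 := by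
    rw [← Real.rpow_add_natCast R_pos.ne']
    exact Real.rpow_le_one_of_one_le_of_nonpos (one_le_japaneseBracket x) (by linarith)
  obtain ⟨integrable, bound⟩ := integrable_secondDifference_mul_rpow_and_abs_integral_le hg
    (by positivity) hα hα' (by positivity) near_le
  refine ⟨integrable, bound.trans ?_⟩
  calc (δ * R) ^ (-α) * ((2 * |g x| + M * δ ^ 2 * R ^ (-a)) * ((δ * R) ^ n * K) + 2 * G)
      ≤ (δ * R) ^ (-α) *
          ((2 * (B * R ^ (-a)) + M * δ ^ 2 * R ^ (-a)) * ((δ * R) ^ n * K) + 2 * G) := by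
        gcongr
    _ = δ ^ (-α) * ((2 * B + M * δ ^ 2) * (δ ^ n * K) * (R ^ (-a) * R ^ n) + 2 * G) *
          R ^ (-α) := by
        rw [Real.mul_rpow hδ.le R_pos.le, mul_pow]; ring
    _ ≤ δ ^ (-α) * ((2 * B + M * δ ^ 2) * (δ ^ n * K) * 1 + 2 * G) * R ^ (-α) := by gcongr
    _ ≤ (δ ^ (-α) * ((2 * B + M * δ ^ 2) * (δ ^ n * K) + 2 * G) + 1) * R ^ (-α) := by
        rw [mul_one]; gcongr; exact le_add_of_nonneg_right one_pos.le

end Kernel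

theorem fractional_laplacian_japanese_bracket_bound_general
    {E : Type*} [NormedAddCommGroup E] [InnerProductSpace ℝ E] [FiniteDimensional ℝ E]
    [Nontrivial E] [MeasurableSpace E] [BorelSpace E] (μ : Measure E) [μ.IsAddHaarMeasure]
    {s a : ℝ} (hs : s ∈ Ioo (0 : ℝ) 1) (ha : finrank ℝ E < a)
    {g : E → ℝ} (hg : ∀ x, g x = (1 + ‖x‖ ^ 2) ^ (-a / 2)) :
    ∃ C > 0, ∀ x,
      Integrable (fun y ↦ (2 * g x - g (x + y) - g (x - y)) *
        ‖y‖ ^ (-(finrank ℝ E : ℝ) - 2 * s)) μ ∧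
      |∫ y, (2 * g x - g (x + y) - g (x - y)) * ‖y‖ ^ (-(finrank ℝ E : ℝ) - 2 * s) ∂μ| ≤
        C * (1 + ‖x‖ ^ 2) ^ (-(finrank ℝ E + 2 * s) / 2) := by
  obtain ⟨s_pos, s_lt_one⟩ := hs
  have g_integrable : Integrable g μ := by
    simpa only [← hg] using integrable_rpow_neg_one_add_norm_sq (μ := μ) ha
  obtain rfl : g = fun x ↦ japaneseBracket x ^ (-a) :=
    funext fun x ↦ (hg x).trans (one_add_norm_sq_rpow_div_two x (-a))
  obtain ⟨δ, δ_pos, M, M_nonneg, near_le⟩ :=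
    exists_abs_secondDifference_japaneseBracket_rpow_le (E := E) (-a)
  have center_le (x : E) : |japaneseBracket x ^ (-a)| ≤ 1 * japaneseBracket x ^ (-a) := by
    rw [one_mul, abs_of_pos (Real.rpow_pos_of_pos (japaneseBracket_pos x) _)]
  simp only [one_add_norm_sq_rpow_div_two, ← neg_add']
  exact exists_abs_integral_secondDifference_mul_rpow_le g_integrable ha.le (by linarith)
    (by linarith) center_le δ_pos M_nonneg near_le

/-- Pointwise bound `|(-Δ)^s ⟨·⟩^{-a}(x)| ≲ ⟨x⟩^{-n-2s}` for the singular-integral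
representation of the fractional Laplacian applied to `g(x) = (1+‖x‖²)^{-a/2}`, `a > n`. -/
theorem fractional_laplacian_japanese_bracket_bound
    (n : ℕ) (hn : 1 ≤ n) (s a : ℝ) (hs : s ∈ Set.Ioo (0:ℝ) 1) (ha : (n : ℝ) < a)
    (g : EuclideanSpace ℝ (Fin n) → ℝ)
    (hg : ∀ x, g x = (1 + ‖x‖ ^ 2) ^ (-a / 2)) :
    ∃ C > (0:ℝ), ∀ x : EuclideanSpace ℝ (Fin n),
      Integrable (fun y : EuclideanSpace ℝ (Fin n) =>
        (2 * g x - g (x + y) - g (x - y)) * ‖y‖ ^ (-(n : ℝ) - 2 * s)) ∧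
      |∫ y : EuclideanSpace ℝ (Fin n),
          (2 * g x - g (x + y) - g (x - y)) * ‖y‖ ^ (-(n : ℝ) - 2 * s)|
        ≤ C * (1 + ‖x‖ ^ 2) ^ (-((n : ℝ) + 2 * s) / 2) := by
  have : Nontrivial (EuclideanSpace ℝ (Fin n)) := by
    apply Module.nontrivial_of_finrank_pos (R := ℝ)
    simpa using Nat.pos_of_ne_zero (Nat.one_le_iff_ne_zero.1 hn)
  simpa using fractional_laplacian_japanese_bracket_bound_general volume hs (by simpa using ha) hg
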